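/- Consider the DAT-SGD sequences generated with a gossip matrix P that satisfies the ρ-contraction property for some ρ ∈ (0,1], with a non-decreasing weight sequence (α_t). Then for every t ≥ 2 the consensus distance of the iterates satisfies the explicit bound Ξ_t ≤ (2η² α_t²/ρ)·Σ_{τ=1}^{t−1} (1 − ρ/2)^{t−1−τ} Ψ_τ. -/

import Mathlib

/-- Young inequality for the squared norm of a difference, damped by the factor `1 - ρ`. -/
theorem one_sub_mul_norm_sub_sq_le {E : Type*} [SeminormedAddCommGroup E] {ρ : ℝ}
    (hρ : ρ ∈ Set.Ioc (0 : ℝ) 1) (a b : E) :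
    (1 - ρ) * ‖a - b‖ ^ 2 ≤ (1 - ρ / 2) * ‖a‖ ^ 2 + 2 / ρ * ‖b‖ ^ 2 := by
  obtain ⟨hρ0, hρ1⟩ := hρ
  have htri : ‖a - b‖ ^ 2 ≤ (‖a‖ + ‖b‖) ^ 2 := by
    gcongr
    exact norm_sub_le a b
  have hyoung : (‖a‖ + ‖b‖) ^ 2 ≤ (1 + ρ / 2) * ‖a‖ ^ 2 + (1 + 2 / ρ) * ‖b‖ ^ 2 := by
    have hsq : (1 + ρ / 2) * ‖a‖ ^ 2 + (1 + 2 / ρ) * ‖b‖ ^ 2 - (‖a‖ + ‖b‖) ^ 2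
        = (ρ * ‖a‖ - 2 * ‖b‖) ^ 2 / (2 * ρ) := by
      field_simp
      ring
    have : 0 ≤ (ρ * ‖a‖ - 2 * ‖b‖) ^ 2 / (2 * ρ) := by positivity
    linarith
  have hb : (1 - ρ) * (1 + 2 / ρ) = 2 / ρ - (1 + ρ) := by
    field_simp
    ring
  calc (1 - ρ) * ‖a - b‖ ^ 2
      ≤ (1 - ρ) * ((1 + ρ / 2) * ‖a‖ ^ 2 + (1 + 2 / ρ) * ‖b‖ ^ 2) :=
        mul_le_mul_of_nonneg_left (htri.trans hyoung) (by linarith)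
    _ = (1 - ρ / 2 - ρ ^ 2 / 2) * ‖a‖ ^ 2 + (1 - ρ) * (1 + 2 / ρ) * ‖b‖ ^ 2 := by ring
    _ = (1 - ρ / 2) * ‖a‖ ^ 2 + 2 / ρ * ‖b‖ ^ 2
        - (ρ ^ 2 / 2 * ‖a‖ ^ 2 + (1 + ρ) * ‖b‖ ^ 2) := by rw [hb]; ring
    _ ≤ (1 - ρ / 2) * ‖a‖ ^ 2 + 2 / ρ * ‖b‖ ^ 2 := sub_le_self _ (by positivity)

/-- Mixing with a matrix whose columns sum to one preserves the total. -/
theorem sum_sum_smul_of_col_sum_eq_one {ι E : Type*} [Fintype ι] [AddCommGroup E] [Module ℝ E]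
    {P : Matrix ι ι ℝ} (hP : ∀ j, ∑ i, P i j = 1) (Y : ι → E) :
    ∑ i, ∑ j, P i j • Y j = ∑ j, Y j := by
  rw [Finset.sum_comm]
  simp [← Finset.sum_smul, hP]

/-- A sequence starting at zero and driven by `u (n + 1) ≤ q * u n + c * a n * ψ n` with `a`
monotone is bounded by the geometrically discounted sum of `ψ`. -/
theorem le_mul_sum_pow_mul_of_le_mul_add {q c : ℝ} {u a ψ : ℕ → ℝ} (hq : 0 ≤ q) (hc : 0 ≤ c)
    (hψ : ∀ n, 0 ≤ ψ n) (ha : ∀ n ≥ 1, a n ≤ a (n + 1)) (hu1 : u 1 ≤ 0)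
    (hu : ∀ n ≥ 1, u (n + 1) ≤ q * u n + c * a n * ψ n) (n : ℕ) :
    u (n + 1) ≤ c * a (n + 1) * ∑ τ ∈ Finset.Icc 1 n, q ^ (n - τ) * ψ τ := by
  induction n with
  | zero => simpa using hu1
  | succ n ih =>
    have hsum : ∑ τ ∈ Finset.Icc 1 (n + 1), q ^ (n + 1 - τ) * ψ τ
        = q * ∑ τ ∈ Finset.Icc 1 n, q ^ (n - τ) * ψ τ + ψ (n + 1) := by
      rw [Finset.sum_Icc_succ_top (by omega), Finset.mul_sum]
      congr 1
      · refine Finset.sum_congr rfl fun τ hτ => ?_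
        rw [Nat.sub_add_comm (Finset.mem_Icc.mp hτ).2, pow_succ]
        ring
      · simp
    calc u (n + 1 + 1)
        ≤ q * u (n + 1) + c * a (n + 1) * ψ (n + 1) := hu (n + 1) (by omega)
      _ ≤ q * (c * a (n + 1) * ∑ τ ∈ Finset.Icc 1 n, q ^ (n - τ) * ψ τ)
          + c * a (n + 1) * ψ (n + 1) := by gcongr
      _ = c * a (n + 1) * ∑ τ ∈ Finset.Icc 1 (n + 1), q ^ (n + 1 - τ) * ψ τ := by
        rw [hsum]
        ring
      _ ≤ c * a (n + 1 + 1) * ∑ τ ∈ Finset.Icc 1 (n + 1), q ^ (n + 1 - τ) * ψ τ := by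
        refine mul_le_mul_of_nonneg_right
          (mul_le_mul_of_nonneg_left (ha (n + 1) (by omega)) hc) ?_
        exact Finset.sum_nonneg fun τ _ => mul_nonneg (pow_nonneg hq _) (hψ τ)

/-- For DAT-SGD with a gossip matrix `P` satisfying the ρ-contraction
property and non-decreasing weights, for every `t ≥ 2` the consensus distance of the
iterates satisfies `Ξ_t ≤ (2η² α_t²/ρ)·Σ_{τ=1}^{t−1} (1 − ρ/2)^{t−1−τ} Ψ_τ`. -/
theorem stmt_8
    (d M : ℕ) (hd : 1 ≤ d) (hM : 1 ≤ M)
    (η : ℝ) (hη : 0 < η)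
    (α : ℕ → ℝ) (hα_nonneg : ∀ t ≥ 1, 0 ≤ α t) (hα1 : 0 < α 1)
    (A : ℕ → ℝ) (hA : ∀ t, A t = ∑ τ ∈ Finset.Icc 1 t, α τ)
    (P : Matrix (Fin M) (Fin M) ℝ)
    (hP_symm : P.IsSymm)
    (hP_nonneg : ∀ i j, 0 ≤ P i j) (hP_le_one : ∀ i j, P i j ≤ 1)
    (hP_rows : ∀ i, ∑ j, P i j = 1) (hP_cols : ∀ j, ∑ i, P i j = 1)
    (w₁ : EuclideanSpace ℝ (Fin d))
    (g w x : ℕ → Fin M → EuclideanSpace ℝ (Fin d))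
    (hw1 : ∀ i, w 1 i = w₁) (hx1 : ∀ i, x 1 i = w₁)
    (hwrec : ∀ t ≥ 1, ∀ i,
      w (t + 1) i = ∑ j, P i j • (w t j - (η * α t) • g t j))
    (hxrec : ∀ t ≥ 1, ∀ i,
      x (t + 1) i = ∑ j, P i j •
        ((A (t - 1) / A t) • x t j + (α t / A t) • (w t j - (η * α t) • g t j)))
    (hα_mono : ∀ t ≥ 1, α t ≤ α (t + 1))
    (ρ : ℝ) (hρ : ρ ∈ Set.Ioc (0 : ℝ) 1)
    (hP_contract : ∀ Y : Fin M → EuclideanSpace ℝ (Fin d),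
      ∑ i, ‖(∑ j, P i j • Y j) - (M : ℝ)⁻¹ • ∑ j, Y j‖ ^ 2
        ≤ (1 - ρ) * ∑ i, ‖Y i - (M : ℝ)⁻¹ • ∑ j, Y j‖ ^ 2)
    (Γ Ξ Ψ : ℕ → ℝ)
    (hΓ : ∀ t, Γ t = (M : ℝ)⁻¹ * ∑ i, ‖x t i - (M : ℝ)⁻¹ • ∑ j, x t j‖ ^ 2)
    (hΞ : ∀ t, Ξ t = (M : ℝ)⁻¹ * ∑ i, ‖w t i - (M : ℝ)⁻¹ • ∑ j, w t j‖ ^ 2)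
    (hΨ : ∀ t, Ψ t = (M : ℝ)⁻¹ * ∑ i, ‖g t i - (M : ℝ)⁻¹ • ∑ j, g t j‖ ^ 2)
    :
    ∀ t ≥ 2,
      Ξ t ≤ (2 * η ^ 2 * (α t) ^ 2 / ρ)
        * ∑ τ ∈ Finset.Icc 1 (t - 1), (1 - ρ / 2) ^ (t - 1 - τ) * Ψ τ := by
  have hρ0 : 0 < ρ := hρ.1
  have hM0 : (M : ℝ) ≠ 0 := Nat.cast_ne_zero.mpr (by omega)
  have hΞ1 : Ξ 1 ≤ 0 := by
    rw [hΞ]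
    simp [hw1, ← Nat.cast_smul_eq_nsmul ℝ, smul_smul, hM0]
  have hstep : ∀ n ≥ 1,
      Ξ (n + 1) ≤ (1 - ρ / 2) * Ξ n + 2 * η ^ 2 / ρ * α n ^ 2 * Ψ n := by
    intro n hn
    have hdev : ∀ i,
        w n i - (η * α n) • g n i - (M : ℝ)⁻¹ • ∑ j, (w n j - (η * α n) • g n j)
          = (w n i - (M : ℝ)⁻¹ • ∑ j, w n j)
            - (η * α n) • (g n i - (M : ℝ)⁻¹ • ∑ j, g n j) := by
      intro i
      rw [Finset.sum_sub_distrib, ← Finset.smul_sum]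
      module
    have hcontract := hP_contract fun j => w n j - (η * α n) • g n j
    simp only [hdev] at hcontract
    rw [hΞ (n + 1), hΞ n, hΨ n]
    simp only [hwrec n hn, sum_sum_smul_of_col_sum_eq_one hP_cols]
    refine (mul_le_mul_of_nonneg_left (hcontract.trans ?_) (by positivity)).trans_eq
      (b := (M : ℝ)⁻¹ * ((1 - ρ / 2) * ∑ i, ‖w n i - (M : ℝ)⁻¹ • ∑ j, w n j‖ ^ 2
        + 2 / ρ * ((η * α n) ^ 2 * ∑ i, ‖g n i - (M : ℝ)⁻¹ • ∑ j, g n j‖ ^ 2))) (by ring)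
    simp only [Finset.mul_sum]
    rw [← Finset.sum_add_distrib]
    refine Finset.sum_le_sum fun i _ => (one_sub_mul_norm_sub_sq_le hρ _ _).trans_eq ?_
    rw [norm_smul, mul_pow, Real.norm_eq_abs, sq_abs]
  intro t ht
  obtain ⟨n, rfl⟩ : ∃ n, t = n + 1 := ⟨t - 1, by omega⟩
  have hbound := le_mul_sum_pow_mul_of_le_mul_add (a := fun n => α n ^ 2)
    (by linarith [hρ.2] : 0 ≤ 1 - ρ / 2) (by positivity : 0 ≤ 2 * η ^ 2 / ρ)
    (fun n => by rw [hΨ]; positivity)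
    (fun n hn => pow_le_pow_left₀ (hα_nonneg n hn) (hα_mono n hn) 2) hΞ1 hstep n
  rwa [div_mul_eq_mul_div] at hbound
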